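/- Let D be an admissible integer, p a prime with p ≡ 1 (mod 3) and p ∤ D, written p = u² + 3v² with u,v > 0 and gcd(u,3v) = 1, and let (x₀,y₀,z₀) ∈ Y_D^1(ℤ)*. Then [p]⁺([p]⁺(x₀,y₀,z₀)) ∈ Y_{p²D}^1(ℤ)* if and only if [p]⁺(x₀,y₀,z₀) ∈ Y_{pD}^1(ℤ)*; similarly, [p]⁻([p]⁻(x₀,y₀,z₀)) ∈ Y_{p²D}^1(ℤ)* if and only if [p]⁻(x₀,y₀,z₀) ∈ Y_{pD}^1(ℤ)*. -/

import Mathlib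

/-- `X_1^D(ℤ)`: triples `(x,y,z)` with `xyz ≠ 0`, `x² + 27y² = 4z³`, `gcd(y,z) = D`. -/
def X1D (D : ℕ) : Set (ℤ × ℤ × ℤ) :=
  {q | q.1 * q.2.1 * q.2.2 ≠ 0 ∧ q.1 ^ 2 + 27 * q.2.1 ^ 2 = 4 * q.2.2 ^ 3 ∧
    Int.gcd q.2.1 q.2.2 = D}

/-- `X_1^D(ℤ)*`: members of `X_1^D(ℤ)` such that `ℓ² ∣ D → ℓ³ ∤ y` for every prime `ℓ`. -/
def X1Dstar (D : ℕ) : Set (ℤ × ℤ × ℤ) :=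
  {q | q ∈ X1D D ∧ ∀ ℓ : ℕ, ℓ.Prime → ℓ ^ 2 ∣ D → ¬ ((ℓ : ℤ) ^ 3 ∣ q.2.1)}

/-- `X_D^1(ℤ)`: triples `(x,y,z)` with `xyz ≠ 0`, `x² + 27y² = 4Dz³`, `gcd(y,z) = 1`. -/
def XD1 (D : ℕ) : Set (ℤ × ℤ × ℤ) :=
  {q | q.1 * q.2.1 * q.2.2 ≠ 0 ∧ q.1 ^ 2 + 27 * q.2.1 ^ 2 = 4 * (D : ℤ) * q.2.2 ^ 3 ∧
    Int.gcd q.2.1 q.2.2 = 1}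

/-- `X_D^1(ℤ)*`: members of `X_D^1(ℤ)` such that `ℓ² ∣ D → ℓ ∤ y` for every prime `ℓ`. -/
def XD1star (D : ℕ) : Set (ℤ × ℤ × ℤ) :=
  {q | q ∈ XD1 D ∧ ∀ ℓ : ℕ, ℓ.Prime → ℓ ^ 2 ∣ D → ¬ ((ℓ : ℤ) ∣ q.2.1)}

/-- `Y_D^1(ℤ)`: triples `(x,y,z)` with `xyz ≠ 0`, `x² + 3y² = 4Dz³`, `gcd(y,z) = 1`. -/
def YD1 (D : ℕ) : Set (ℤ × ℤ × ℤ) :=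
  {q | q.1 * q.2.1 * q.2.2 ≠ 0 ∧ q.1 ^ 2 + 3 * q.2.1 ^ 2 = 4 * (D : ℤ) * q.2.2 ^ 3 ∧
    Int.gcd q.2.1 q.2.2 = 1}

/-- `Y_D^1(ℤ)*`: members of `Y_D^1(ℤ)` such that `ℓ² ∣ D → ℓ ∤ y` for every prime `ℓ`. -/
def YD1star (D : ℕ) : Set (ℤ × ℤ × ℤ) :=
  {q | q ∈ YD1 D ∧ ∀ ℓ : ℕ, ℓ.Prime → ℓ ^ 2 ∣ D → ¬ ((ℓ : ℤ) ∣ q.2.1)}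

/-- A natural number is cube-free if no prime cube divides it. -/
def Cubefree (D : ℕ) : Prop := ∀ p : ℕ, p.Prime → ¬ p ^ 3 ∣ D

/-- `D` is admissible when it is a positive cube-free integer of the form `D₁` or `9·D₁`,
where `D₁ = 1` or every prime factor of `D₁` is `≡ 1 (mod 3)`. -/
def Admissible (D : ℕ) : Prop :=
  0 < D ∧ Cubefree D ∧
    ∃ D₁ : ℕ, (D = D₁ ∨ D = 9 * D₁) ∧
      (D₁ = 1 ∨ ∀ p : ℕ, p.Prime → p ∣ D₁ → p % 3 = 1)

/-- the level-raising map `[p]⁺` for `p = u² + 3v²`. -/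
def pRaisePlus (u v : ℤ) (q : ℤ × ℤ × ℤ) : ℤ × ℤ × ℤ :=
  (u * q.1 + 3 * v * q.2.1, u * q.2.1 - v * q.1, q.2.2)

/-- the level-raising map `[p]⁻` for `p = u² + 3v²`. -/
def pRaiseMinus (u v : ℤ) (q : ℤ × ℤ × ℤ) : ℤ × ℤ × ℤ :=
  (u * q.1 - 3 * v * q.2.1, u * q.2.1 + v * q.1, q.2.2)

open Classical in
/-- the level-lowering map `[p]_*` for `p = u² + 3v²`. -/
noncomputable def pLower (p u v : ℤ) (q : ℤ × ℤ × ℤ) : ℤ × ℤ × ℤ :=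
  if p ∣ (u * q.2.1 + v * q.1) then
    ((u * q.1 - 3 * v * q.2.1) / p, (u * q.2.1 + v * q.1) / p, q.2.2)
  else
    ((u * q.1 + 3 * v * q.2.1) / p, (u * q.2.1 - v * q.1) / p, q.2.2)

/-!
In `ℤ[√-3]`, put `π = u + v√-3`; then `[p]⁻` multiplies `x + y√-3` by `π`, and `[p]⁺` multiplies
it by the conjugate of `π`. Since `π` has norm `p`, no prime other than `p` can obstruct raising a
point of `Y*`, so raising succeeds when `p` does not divide the new `y`-coordinate. Conversely, at a
level divisible by `p`, membership in `Y*` forces `p ∤ y`: otherwise `p ∣ x`, and then `p²` divides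
the level because `p ∤ 2z`, which `Y*` excludes. Finally `π` and its conjugate are roots of
`t² = 2ut - p` with `p ∤ 2u`, so the `y`-coordinates after one and after two raisings are divisible
by `p` simultaneously.
-/

lemma dvd_fst_of_dvd_sq_add_mul_sq {R : Type*} [CommRing R] {ℓ x y n : R} (hℓ : Prime ℓ)
    (h : ℓ ∣ x ^ 2 + n * y ^ 2) (hy : ℓ ∣ y) : ℓ ∣ x :=
  hℓ.dvd_of_dvd_pow ((dvd_add_left ((dvd_pow hy two_ne_zero).mul_left n)).1 h)

lemma not_dvd_of_eq_sq_add_three_mul_sq {p u v : ℤ} (hp : Prime p) (hu : u ≠ 0)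
    (hpuv : p = u ^ 2 + 3 * v ^ 2) : ¬ p ∣ u := by
  intro hpu
  have hpos : 0 < p := by rw [hpuv]; positivity
  have hsq : p ^ 2 ≤ p := calc
    p ^ 2 ≤ u ^ 2 := Int.le_of_dvd (by positivity) (pow_dvd_pow_of_dvd hpu 2)
    _ ≤ p := by rw [hpuv]; linarith [sq_nonneg v]
  exact hp.not_isUnit (Int.isUnit_iff.2 (Or.inl (by nlinarith)))

lemma not_dvd_two_of_eq_sq_add_three_mul_sq {p u v : ℤ} (hp : Prime p)
    (hpuv : p = u ^ 2 + 3 * v ^ 2) : ¬ p ∣ 2 := by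
  intro hdvd
  have hle : p ≤ 2 := Int.le_of_dvd two_pos hdvd
  have hnonneg : 0 ≤ p := by rw [hpuv]; positivity
  obtain rfl : p = 2 := by have := hp.ne_zero; have := hp.ne_one; omega
  have hmod : (2 : ZMod 3) = u ^ 2 + 3 * v ^ 2 := by
    exact_mod_cast congrArg (Int.cast : ℤ → ZMod 3) hpuv
  exact (by decide : ∀ a b : ZMod 3, 2 ≠ a ^ 2 + 3 * b ^ 2) _ _ hmod

section LevelRaising

variable (u v : ℤ) (q : ℤ × ℤ × ℤ)

lemma pRaiseMinus_eq_pRaisePlus_neg : pRaiseMinus u v q = pRaisePlus u (-v) q := by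
  ext <;> simp only [pRaiseMinus, pRaisePlus] <;> ring

lemma pRaisePlus_sq_add_three_mul_sq :
    (pRaisePlus u v q).1 ^ 2 + 3 * (pRaisePlus u v q).2.1 ^ 2 =
      (u ^ 2 + 3 * v ^ 2) * (q.1 ^ 2 + 3 * q.2.1 ^ 2) := by
  simp only [pRaisePlus]
  ring

lemma sq_add_three_mul_sq_mul_snd :
    (u ^ 2 + 3 * v ^ 2) * q.2.1 = u * (pRaisePlus u v q).2.1 + v * (pRaisePlus u v q).1 := by
  simp only [pRaisePlus]
  ring

lemma pRaisePlus_pRaisePlus_snd :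
    (pRaisePlus u v (pRaisePlus u v q)).2.1 =
      2 * u * (pRaisePlus u v q).2.1 - (u ^ 2 + 3 * v ^ 2) * q.2.1 := by
  simp only [pRaisePlus]
  ring

variable {u v q}

lemma dvd_snd_of_dvd_pRaisePlus_snd {ℓ : ℤ} (hℓ : Prime ℓ) (hprime : Prime (u ^ 2 + 3 * v ^ 2))
    (hraise : ¬ u ^ 2 + 3 * v ^ 2 ∣ (pRaisePlus u v q).2.1)
    (hnorm : ℓ ∣ q.1 ^ 2 + 3 * q.2.1 ^ 2) (hdvd : ℓ ∣ (pRaisePlus u v q).2.1) : ℓ ∣ q.2.1 := by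
  have hfst : ℓ ∣ (pRaisePlus u v q).1 := by
    refine dvd_fst_of_dvd_sq_add_mul_sq (n := 3) hℓ ?_ hdvd
    rw [pRaisePlus_sq_add_three_mul_sq]
    exact hnorm.mul_left _
  have hmul : ℓ ∣ (u ^ 2 + 3 * v ^ 2) * q.2.1 := by
    rw [sq_add_three_mul_sq_mul_snd]
    exact dvd_add (hdvd.mul_left u) (hfst.mul_left v)
  refine (hℓ.dvd_or_dvd hmul).resolve_left fun hℓp ↦ hraise ?_
  exact ((hℓ.dvd_prime_iff_associated hprime).1 hℓp).symm.dvd.trans hdvd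

lemma pRaisePlus_fst_ne_zero (hprime : Prime (u ^ 2 + 3 * v ^ 2)) (hu : ¬ u ^ 2 + 3 * v ^ 2 ∣ u)
    (hraise : ¬ u ^ 2 + 3 * v ^ 2 ∣ (pRaisePlus u v q).2.1) : (pRaisePlus u v q).1 ≠ 0 := by
  intro hfst
  have hmul : u ^ 2 + 3 * v ^ 2 ∣ u * (pRaisePlus u v q).2.1 :=
    ⟨q.2.1, by rw [sq_add_three_mul_sq_mul_snd, hfst]; ring⟩
  exact (hprime.dvd_or_dvd hmul).elim hu hraise

lemma dvd_pRaisePlus_pRaisePlus_snd_iff {p : ℤ} (hp : Prime p) (hp2 : ¬ p ∣ 2) (hu : ¬ p ∣ u)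
    (hpuv : p = u ^ 2 + 3 * v ^ 2) :
    p ∣ (pRaisePlus u v (pRaisePlus u v q)).2.1 ↔ p ∣ (pRaisePlus u v q).2.1 := by
  rw [pRaisePlus_pRaisePlus_snd, ← hpuv, dvd_sub_left (dvd_mul_right _ _), hp.dvd_mul]
  exact or_iff_right (hp.not_dvd_mul hp2 hu)

variable {N p : ℕ}

lemma not_dvd_snd_of_mem_YD1star (hp : p.Prime) (hp2 : ¬ (p : ℤ) ∣ 2) (hpN : p ∣ N)
    (hq : q ∈ YD1star N) : ¬ (p : ℤ) ∣ q.2.1 := by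
  intro hy
  obtain ⟨⟨-, heq, hgcd⟩, hstar⟩ := hq
  have hpz : Prime (p : ℤ) := Nat.prime_iff_prime_int.1 hp
  have hx : (p : ℤ) ∣ q.1 := by
    refine dvd_fst_of_dvd_sq_add_mul_sq (n := 3) hpz ?_ hy
    rw [heq]
    exact ((Int.natCast_dvd_natCast.2 hpN).mul_left 4).mul_right _
  have hz : ¬ (p : ℤ) ∣ q.2.2 := fun hz ↦
    hpz.not_isUnit ((Int.isCoprime_iff_gcd_eq_one.2 hgcd).isUnit_of_dvd' hy hz)
  have hfour : ¬ (p : ℤ) ∣ 2 * 2 := hpz.not_dvd_mul hp2 hp2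
  have hcofactor : ¬ (p : ℤ) ∣ 4 * q.2.2 ^ 3 :=
    hpz.not_dvd_mul hfour (mt hpz.dvd_of_dvd_pow hz)
  have hsq : (p : ℤ) ^ 2 ∣ 4 * q.2.2 ^ 3 * N := by
    rw [mul_right_comm, ← heq]
    exact dvd_add (pow_dvd_pow_of_dvd hx 2) ((pow_dvd_pow_of_dvd hy 2).mul_left 3)
  exact hstar p hp (by exact_mod_cast hpz.pow_dvd_of_dvd_mul_left 2 hcofactor hsq) hy

lemma pRaisePlus_mem_YD1 (hp : p.Prime) (hu : ¬ (p : ℤ) ∣ u) (hpuv : (p : ℤ) = u ^ 2 + 3 * v ^ 2)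
    (hq : q ∈ YD1 N) (hraise : ¬ (p : ℤ) ∣ (pRaisePlus u v q).2.1) :
    pRaisePlus u v q ∈ YD1 (p * N) := by
  obtain ⟨hne, heq, hgcd⟩ := hq
  have hprime : Prime (u ^ 2 + 3 * v ^ 2) := hpuv ▸ Nat.prime_iff_prime_int.1 hp
  rw [hpuv] at hu hraise
  have hsnd : (pRaisePlus u v q).2.1 ≠ 0 := fun h ↦ hraise (h ▸ dvd_zero _)
  refine ⟨mul_ne_zero (mul_ne_zero (pRaisePlus_fst_ne_zero hprime hu hraise) hsnd)
    (right_ne_zero_of_mul hne), ?_, ?_⟩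
  · rw [pRaisePlus_sq_add_three_mul_sq, heq, ← hpuv]
    push_cast [pRaisePlus]
    ring
  · refine Int.isCoprime_iff_gcd_eq_one.1
      (isCoprime_of_prime_dvd (fun h ↦ hsnd h.1) fun ℓ hℓ hy hz ↦ ?_)
    have hnorm : ℓ ∣ q.1 ^ 2 + 3 * q.2.1 ^ 2 := heq ▸ (dvd_pow hz three_ne_zero).mul_left _
    have hℓy : ℓ ∣ q.2.1 := dvd_snd_of_dvd_pRaisePlus_snd hℓ hprime hraise hnorm hy
    exact hℓ.not_isUnit ((Int.isCoprime_iff_gcd_eq_one.2 hgcd).isUnit_of_dvd' hℓy hz)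

lemma pRaisePlus_mem_YD1star (hp : p.Prime) (hu : ¬ (p : ℤ) ∣ u)
    (hpuv : (p : ℤ) = u ^ 2 + 3 * v ^ 2) (hq : q ∈ YD1star N)
    (hraise : ¬ (p : ℤ) ∣ (pRaisePlus u v q).2.1) : pRaisePlus u v q ∈ YD1star (p * N) := by
  refine ⟨pRaisePlus_mem_YD1 hp hu hpuv hq.1 hraise, fun ℓ hℓ hdvd hy ↦ ?_⟩
  have hne : ℓ ≠ p := by rintro rfl; exact hraise hy
  have hsqN : ℓ ^ 2 ∣ N :=
    (((Nat.coprime_primes hℓ hp).2 hne).pow_left 2).dvd_of_dvd_mul_left hdvd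
  have hℓN : (ℓ : ℤ) ∣ N := Int.natCast_dvd_natCast.2 ((dvd_pow_self ℓ two_ne_zero).trans hsqN)
  have hnorm : (ℓ : ℤ) ∣ q.1 ^ 2 + 3 * q.2.1 ^ 2 := by
    rw [hq.1.2.1]
    exact (hℓN.mul_left 4).mul_right _
  rw [hpuv] at hraise
  exact hq.2 ℓ hℓ hsqN (dvd_snd_of_dvd_pRaisePlus_snd (Nat.prime_iff_prime_int.1 hℓ)
    (hpuv ▸ Nat.prime_iff_prime_int.1 hp) hraise hnorm hy)

theorem pRaisePlus_pRaisePlus_mem_YD1star_iff (hp : p.Prime) (hu : u ≠ 0)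
    (hpuv : (p : ℤ) = u ^ 2 + 3 * v ^ 2) (hq : q ∈ YD1star N) :
    pRaisePlus u v (pRaisePlus u v q) ∈ YD1star (p ^ 2 * N) ↔
      pRaisePlus u v q ∈ YD1star (p * N) := by
  have hpz : Prime (p : ℤ) := Nat.prime_iff_prime_int.1 hp
  have hp2 : ¬ (p : ℤ) ∣ 2 := not_dvd_two_of_eq_sq_add_three_mul_sq hpz hpuv
  have hpu : ¬ (p : ℤ) ∣ u := not_dvd_of_eq_sq_add_three_mul_sq hpz hu hpuv
  have hdvd_iff := dvd_pRaisePlus_pRaisePlus_snd_iff (q := q) hpz hp2 hpu hpuv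
  rw [pow_two, mul_assoc]
  constructor <;> intro h
  · have hndvd := not_dvd_snd_of_mem_YD1star hp hp2 (dvd_mul_right _ _) h
    exact pRaisePlus_mem_YD1star hp hpu hpuv hq (mt hdvd_iff.2 hndvd)
  · have hndvd := not_dvd_snd_of_mem_YD1star hp hp2 (dvd_mul_right _ _) h
    exact pRaisePlus_mem_YD1star hp hpu hpuv h (mt hdvd_iff.1 hndvd)

end LevelRaising

theorem stmt_15_general {D p : ℕ} (hp : p.Prime) {u v : ℤ} (hu : u ≠ 0)
    (hpuv : (p : ℤ) = u ^ 2 + 3 * v ^ 2) {q : ℤ × ℤ × ℤ} (hq : q ∈ YD1star D) :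
    (pRaisePlus u v (pRaisePlus u v q) ∈ YD1star (p ^ 2 * D) ↔
      pRaisePlus u v q ∈ YD1star (p * D)) ∧
    (pRaiseMinus u v (pRaiseMinus u v q) ∈ YD1star (p ^ 2 * D) ↔
      pRaiseMinus u v q ∈ YD1star (p * D)) := by
  simp only [pRaiseMinus_eq_pRaisePlus_neg]
  exact ⟨pRaisePlus_pRaisePlus_mem_YD1star_iff hp hu hpuv hq,
    pRaisePlus_pRaisePlus_mem_YD1star_iff hp hu (by rwa [neg_sq]) hq⟩

theorem stmt_15 (D : ℕ) (hD : Admissible D) (p : ℕ) (hp : p.Prime) (hp1 : p % 3 = 1)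
    (hpD : ¬ p ∣ D) (u v : ℤ) (hu : 0 < u) (hv : 0 < v)
    (hpuv : (p : ℤ) = u ^ 2 + 3 * v ^ 2) (hgcd : Int.gcd u (3 * v) = 1)
    (x₀ y₀ z₀ : ℤ) (hxyz : (x₀, y₀, z₀) ∈ YD1star D) :
    (pRaisePlus u v (pRaisePlus u v (x₀, y₀, z₀)) ∈ YD1star (p ^ 2 * D) ↔
      pRaisePlus u v (x₀, y₀, z₀) ∈ YD1star (p * D)) ∧
    (pRaiseMinus u v (pRaiseMinus u v (x₀, y₀, z₀)) ∈ YD1star (p ^ 2 * D) ↔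
      pRaiseMinus u v (x₀, y₀, z₀) ∈ YD1star (p * D)) :=
  stmt_15_general hp hu.ne' hpuv hxyz
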